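/- Let (s,x̄) ∈ I × U with x̄ = x(s,t(s,x̄)), δ(s,t(s,x̄)) = 0, and [x_t(s,t(s,x̄)), c(s,t(s,x̄))] ≠ 0. Then G_sss(s,x̄) = (1 + t_s(s,x̄)²)·∂/∂s(δ(s,t(s,x̄))), where ∂/∂s(δ(s,t(s,x̄))) = δ_s + δ_t·t_s evaluated at (s,t(s,x̄)). In particular, at such a point G_sss(s,x̄) = 0 if and only if ∂/∂s(δ(s,t(s,x̄))) = 0. -/

import Mathlib

noncomputable section

/-- `det2 u v` is the determinant of the 2×2 matrix with columns `u` and `v`. -/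
def det2 (u v : ℝ × ℝ) : ℝ := u.1 * v.2 - u.2 * v.1

/-- Partial derivative with respect to the first coordinate `s`. -/
def pds (f : ℝ × ℝ → ℝ) (p : ℝ × ℝ) : ℝ := fderiv ℝ f p (1, 0)

/-- Partial derivative with respect to the second coordinate `t`. -/
def pdt (f : ℝ × ℝ → ℝ) (p : ℝ × ℝ) : ℝ := fderiv ℝ f p (0, 1)

/-- The planar map `x = (A, B)`. -/
def xmap (A B : ℝ × ℝ → ℝ) (p : ℝ × ℝ) : ℝ × ℝ := (A p, B p)

/-- The conjugate map `c = (-D, C)`. -/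
def cmap (C D : ℝ × ℝ → ℝ) (p : ℝ × ℝ) : ℝ × ℝ := (-D p, C p)

/-- `x_s = (A_s, B_s)`. -/
def xs (A B : ℝ × ℝ → ℝ) (p : ℝ × ℝ) : ℝ × ℝ := (pds A p, pds B p)

/-- `x_t = (A_t, B_t)`. -/
def xt (A B : ℝ × ℝ → ℝ) (p : ℝ × ℝ) : ℝ × ℝ := (pdt A p, pdt B p)

/-- `δ = A_s B_t - A_t B_s = [x_s, x_t]`. -/
def deltaMap (A B : ℝ × ℝ → ℝ) (p : ℝ × ℝ) : ℝ :=
  pds A p * pdt B p - pdt A p * pds B p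

/-!
Fix `x̄` and restrict `x`, `c` and `g` to the curve `r ↦ (r, t(r, x̄))`, writing `'` for `d/dr`, so
that `g' = [x', c]` and `[x̄ - x, c] = 0`. Differentiating the constraint gives
`[x', c] = [x̄ - x, c']`, so `g' = [x̄ - x, c']`, and two more derivatives at a point where `x = x̄`
and `x' = 0` leave only `g''' = -[x', c']'`. Since `x' = x_s + t_s x_t` and, by the Cauchy–Riemann
equations, `c' = t_s x_s - x_t`, the bracket is `[x', c'] = -(1 + t_s²) δ`. Finally `x' = 0` at the
point in question: there `[x', x_t] = δ = 0` and `[x', c] = 0`, while `[x_t, c] ≠ 0`.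
-/

section Pairing

open Set

variable {𝕜 E F H : Type*} [NontriviallyNormedField 𝕜] [NormedAddCommGroup E] [NormedSpace 𝕜 E]
  [NormedAddCommGroup F] [NormedSpace 𝕜 F] [NormedAddCommGroup H] [NormedSpace 𝕜 H]
  (P : E →L[𝕜] F →L[𝕜] H) {I : Set 𝕜} {x : 𝕜 → E} {c : 𝕜 → F} {g : 𝕜 → H} {x₀ : E} {r : 𝕜}

theorem hasDerivAt_pairing_const_sub {x' : E} {c' : F} (hx : HasDerivAt x x' r)
    (hc : HasDerivAt c c' r) :
    HasDerivAt (fun q => P (x₀ - x q) (c q)) (P (x₀ - x r) c' - P x' (c r)) r := by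
  simpa [sub_eq_add_neg] using
    P.hasDerivAt_of_bilinear (fun _ => hx.const_sub x₀) (fun _ => hc)

theorem pairing_sub_deriv_eq (hI : IsOpen I) (hx : DifferentiableOn 𝕜 x I)
    (hc : DifferentiableOn 𝕜 c I) (hP : ∀ r ∈ I, P (x₀ - x r) (c r) = 0) (hr : r ∈ I) :
    P (x₀ - x r) (deriv c r) = P (deriv x r) (c r) := by
  rw [← sub_eq_zero, ← (hasDerivAt_pairing_const_sub P (hx.hasDerivAt (hI.mem_nhds hr))
    (hc.hasDerivAt (hI.mem_nhds hr))).deriv]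
  exact (EqOn.deriv hP hI hr).trans (deriv_const r 0)

theorem deriv_deriv_eqOn_pairing (hI : IsOpen I) (hx : DifferentiableOn 𝕜 x I)
    (hc : ContDiffOn 𝕜 2 c I) (hg : ∀ r ∈ I, deriv g r = P (deriv x r) (c r))
    (hP : ∀ r ∈ I, P (x₀ - x r) (c r) = 0) :
    EqOn (deriv (deriv g))
      (fun r => P (x₀ - x r) (deriv (deriv c) r) - P (deriv x r) (deriv c r)) I := by
  intro r hr
  have hc' : DifferentiableOn 𝕜 (deriv c) I :=
    (hc.deriv_of_isOpen (m := 1) hI (by norm_num)).differentiableOn one_ne_zero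
  have hg' : EqOn (deriv g) (fun q => P (x₀ - x q) (deriv c q)) I := fun q hq =>
    (hg q hq).trans (pairing_sub_deriv_eq P hI hx (hc.differentiableOn two_ne_zero) hP hq).symm
  rw [hg'.deriv hI hr]
  exact (hasDerivAt_pairing_const_sub P (hx.hasDerivAt (hI.mem_nhds hr))
    (hc'.hasDerivAt (hI.mem_nhds hr))).deriv

theorem deriv_deriv_deriv_eq_neg_deriv_pairing (hI : IsOpen I) (hx : ContDiffOn 𝕜 2 x I)
    (hc : ContDiffOn 𝕜 3 c I) (hg : ∀ r ∈ I, deriv g r = P (deriv x r) (c r))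
    (hP : ∀ r ∈ I, P (x₀ - x r) (c r) = 0) (hr : r ∈ I) (hxr : x r = x₀)
    (hx'r : deriv x r = 0) :
    deriv (deriv (deriv g)) r = -deriv (fun q => P (deriv x q) (deriv c q)) r := by
  have hIr := hI.mem_nhds hr
  have hx₁ : DifferentiableOn 𝕜 x I := hx.differentiableOn two_ne_zero
  have hx₂ : DifferentiableOn 𝕜 (deriv x) I :=
    (hx.deriv_of_isOpen (m := 1) hI (by norm_num)).differentiableOn one_ne_zero
  have hc₁ : ContDiffOn 𝕜 2 (deriv c) I := hc.deriv_of_isOpen hI (by norm_num)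
  have hc₂ : DifferentiableOn 𝕜 (deriv (deriv c)) I :=
    (hc₁.deriv_of_isOpen (m := 1) hI (by norm_num)).differentiableOn one_ne_zero
  have hvanish : HasDerivAt (fun q => P (x₀ - x q) (deriv (deriv c) q)) 0 r := by
    simpa [hxr, hx'r] using hasDerivAt_pairing_const_sub P (x₀ := x₀)
      (hx₁.hasDerivAt hIr) (hc₂.hasDerivAt hIr)
  have hpair : DifferentiableAt 𝕜 (fun q => P (deriv x q) (deriv c q)) r :=
    (P.hasDerivAt_of_bilinear (fun _ => hx₂.hasDerivAt hIr)
      (fun _ => (hc₁.differentiableOn two_ne_zero).hasDerivAt hIr)).differentiableAt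
  rw [(deriv_deriv_eqOn_pairing P hI hx₁ (hc.of_le (by norm_num)) hg hP).deriv hI hr,
    (hvanish.fun_sub hpair.hasDerivAt).deriv, zero_sub]

end Pairing

section Det2

/-- The bracket `det2` as a continuous bilinear map, so that the product rule applies to it. -/
def det2Bilin : ℝ × ℝ →L[ℝ] ℝ × ℝ →L[ℝ] ℝ :=
  (ContinuousLinearMap.mul ℝ ℝ).bilinearComp (.fst ℝ ℝ ℝ) (.snd ℝ ℝ ℝ) -
    (ContinuousLinearMap.mul ℝ ℝ).bilinearComp (.snd ℝ ℝ ℝ) (.fst ℝ ℝ ℝ)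

theorem det2Bilin_apply (u v : ℝ × ℝ) : det2Bilin u v = det2 u v := rfl

theorem det2_self (u : ℝ × ℝ) : det2 u u = 0 :=
  sub_eq_zero.mpr (mul_comm _ _)

theorem det2_add_smul_left (u v w : ℝ × ℝ) (a : ℝ) :
    det2 (u + a • v) w = det2 u w + det2 v w * a := by
  simp [← det2Bilin_apply, mul_comm]

theorem det2_add_smul_smul_sub (u v : ℝ × ℝ) (a : ℝ) :
    det2 (u + a • v) (a • u - v) = -((1 + a ^ 2) * det2 u v) := by
  simp only [det2, Prod.fst_add, Prod.snd_add, Prod.fst_sub, Prod.snd_sub, Prod.smul_fst,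
    Prod.smul_snd, smul_eq_mul]
  ring

theorem eq_zero_of_det2_eq_zero {u v w : ℝ × ℝ} (huv : det2 u v = 0) (huw : det2 u w = 0)
    (hvw : det2 v w ≠ 0) : u = 0 := by
  have cramer : det2 v w • u = det2 u w • v - det2 u v • w := by
    ext <;> simp only [det2, Prod.fst_sub, Prod.snd_sub, Prod.smul_fst, Prod.smul_snd,
      smul_eq_mul] <;> ring
  simpa [huv, huw, hvw] using cramer

end Det2

section PartialDerivatives

theorem pds_neg (f : ℝ × ℝ → ℝ) (p : ℝ × ℝ) : pds (-f) p = -pds f p := by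
  simp [pds, fderiv_neg]

theorem pdt_neg (f : ℝ × ℝ → ℝ) (p : ℝ × ℝ) : pdt (-f) p = -pdt f p := by
  simp [pdt, fderiv_neg]

variable {A B : ℝ × ℝ → ℝ} {p : ℝ × ℝ}

theorem deltaMap_eq_det2 : deltaMap A B p = det2 (xs A B p) (xt A B p) :=
  congrArg (pds A p * pdt B p - ·) (mul_comm _ _)

theorem differentiableAt_deltaMap (hA : ContDiffAt ℝ 2 A p) (hB : ContDiffAt ℝ 2 B p) :
    DifferentiableAt ℝ (deltaMap A B) p := by
  have hpartial {f : ℝ × ℝ → ℝ} (hf : ContDiffAt ℝ 2 f p) (v : ℝ × ℝ) :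
      DifferentiableAt ℝ (fun q => fderiv ℝ f q v) p :=
    ((hf.fderiv_right (m := 1) (by norm_num)).differentiableAt one_ne_zero).clm_apply
      (differentiableAt_const v)
  exact ((hpartial hA _).mul (hpartial hB _)).sub ((hpartial hA _).mul (hpartial hB _))

end PartialDerivatives

section Graph

variable {A B E F f : ℝ × ℝ → ℝ} {τ : ℝ → ℝ} {r : ℝ}

theorem hasDerivAt_comp_graph (hf : DifferentiableAt ℝ f (r, τ r)) (hτ : DifferentiableAt ℝ τ r) :
    HasDerivAt (fun q => f (q, τ q)) (pds f (r, τ r) + pdt f (r, τ r) * deriv τ r) r := by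
  have hgraph : HasDerivAt (fun q => (q, τ q)) ((1 : ℝ), deriv τ r) r :=
    (hasDerivAt_id r).prodMk hτ.hasDerivAt
  have hsplit : ((1 : ℝ), deriv τ r) = (1, 0) + deriv τ r • ((0 : ℝ), (1 : ℝ)) := by simp
  have hcomp := hf.hasFDerivAt.comp_hasDerivAt r hgraph
  rwa [hsplit, map_add, map_smul, smul_eq_mul, mul_comm] at hcomp

theorem deriv_xmap_graph (hA : DifferentiableAt ℝ A (r, τ r)) (hB : DifferentiableAt ℝ B (r, τ r))
    (hτ : DifferentiableAt ℝ τ r) :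
    deriv (fun q => xmap A B (q, τ q)) r = xs A B (r, τ r) + deriv τ r • xt A B (r, τ r) := by
  refine ((hasDerivAt_comp_graph hA hτ).prodMk (hasDerivAt_comp_graph hB hτ)).deriv.trans ?_
  simp [xs, xt, mul_comm]

theorem deriv_comp_graph_eq_det2 {w : ℝ × ℝ} (hA : DifferentiableAt ℝ A (r, τ r))
    (hB : DifferentiableAt ℝ B (r, τ r)) (hf : DifferentiableAt ℝ f (r, τ r))
    (hτ : DifferentiableAt ℝ τ r) (hfs : pds f (r, τ r) = det2 (xs A B (r, τ r)) w)
    (hft : pdt f (r, τ r) = det2 (xt A B (r, τ r)) w) :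
    deriv (fun q => f (q, τ q)) r = det2 (deriv (fun q => xmap A B (q, τ q)) r) w := by
  rw [(hasDerivAt_comp_graph hf hτ).deriv, deriv_xmap_graph hA hB hτ, det2_add_smul_left, hfs, hft]

theorem deriv_xmap_graph_eq_zero {w : ℝ × ℝ} (hA : DifferentiableAt ℝ A (r, τ r))
    (hB : DifferentiableAt ℝ B (r, τ r)) (hτ : DifferentiableAt ℝ τ r)
    (hδ : deltaMap A B (r, τ r) = 0) (hne : det2 (xt A B (r, τ r)) w ≠ 0)
    (hw : det2 (deriv (fun q => xmap A B (q, τ q)) r) w = 0) :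
    deriv (fun q => xmap A B (q, τ q)) r = 0 := by
  refine eq_zero_of_det2_eq_zero ?_ hw hne
  rw [deriv_xmap_graph hA hB hτ, det2_add_smul_left, ← deltaMap_eq_det2, hδ, det2_self, zero_mul,
    add_zero]

-- Here `xmap E F` plays the role of `c`: by definition `cmap C D` is `xmap (-D) C`.
theorem det2_deriv_xmap_graph_of_conjugate (hA : DifferentiableAt ℝ A (r, τ r))
    (hB : DifferentiableAt ℝ B (r, τ r)) (hE : DifferentiableAt ℝ E (r, τ r))
    (hF : DifferentiableAt ℝ F (r, τ r)) (hτ : DifferentiableAt ℝ τ r)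
    (hs : xs E F (r, τ r) = -xt A B (r, τ r)) (ht : xt E F (r, τ r) = xs A B (r, τ r)) :
    det2 (deriv (fun q => xmap A B (q, τ q)) r) (deriv (fun q => xmap E F (q, τ q)) r) =
      -((1 + deriv τ r ^ 2) * deltaMap A B (r, τ r)) := by
  rw [deriv_xmap_graph hA hB hτ, deriv_xmap_graph hE hF hτ, hs, ht, neg_add_eq_sub,
    det2_add_smul_smul_sub, deltaMap_eq_det2]

variable {Ω : Set (ℝ × ℝ)} {I : Set ℝ} {x₀ : ℝ × ℝ}

theorem deriv_det2_deriv_xmap_graph_of_conjugate (hΩ : IsOpen Ω) (hI : IsOpen I)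
    (hA : ContDiffOn ℝ 2 A Ω) (hB : ContDiffOn ℝ 2 B Ω) (hE : DifferentiableOn ℝ E Ω)
    (hF : DifferentiableOn ℝ F Ω) (hτ : ContDiffOn ℝ 2 τ I)
    (hmaps : Set.MapsTo (fun q => (q, τ q)) I Ω)
    (hs : ∀ p ∈ Ω, xs E F p = -xt A B p) (ht : ∀ p ∈ Ω, xt E F p = xs A B p)
    (hr : r ∈ I) (hδ : deltaMap A B (r, τ r) = 0) :
    deriv (fun q => det2 (deriv (fun u => xmap A B (u, τ u)) q)
        (deriv (fun u => xmap E F (u, τ u)) q)) r =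
      -((1 + deriv τ r ^ 2) * deriv (fun q => deltaMap A B (q, τ q)) r) := by
  have hΩr {q : ℝ} (hq : q ∈ I) := hΩ.mem_nhds (hmaps hq)
  have hτ₁ : DifferentiableOn ℝ τ I := hτ.differentiableOn two_ne_zero
  have hτ₂ : DifferentiableOn ℝ (deriv τ) I :=
    (hτ.deriv_of_isOpen (m := 1) hI (by norm_num)).differentiableOn one_ne_zero
  have hbracket : Set.EqOn
      (fun q => det2 (deriv (fun u => xmap A B (u, τ u)) q)
        (deriv (fun u => xmap E F (u, τ u)) q))
      (fun q => -((1 + deriv τ q ^ 2) * deltaMap A B (q, τ q))) I := fun q hq =>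
    det2_deriv_xmap_graph_of_conjugate
      ((hA.differentiableOn two_ne_zero).differentiableAt (hΩr hq))
      ((hB.differentiableOn two_ne_zero).differentiableAt (hΩr hq))
      (hE.differentiableAt (hΩr hq)) (hF.differentiableAt (hΩr hq))
      (hτ₁.differentiableAt (hI.mem_nhds hq)) (hs _ (hmaps hq)) (ht _ (hmaps hq))
  have hδ' := (hasDerivAt_comp_graph
    (differentiableAt_deltaMap (hA.contDiffAt (hΩr hr)) (hB.contDiffAt (hΩr hr)))
    (hτ₁.differentiableAt (hI.mem_nhds hr))).differentiableAt.hasDerivAt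
  have hspeed := ((hτ₂.hasDerivAt (hI.mem_nhds hr)).fun_pow 2).const_add 1
  rw [hbracket.deriv hI hr, (hspeed.fun_mul hδ').fun_neg.deriv, hδ, mul_zero, zero_add]

theorem deriv_deriv_deriv_comp_graph (hΩ : IsOpen Ω) (hI : IsOpen I)
    (hA : ContDiffOn ℝ 2 A Ω) (hB : ContDiffOn ℝ 2 B Ω) (hE : ContDiffOn ℝ 3 E Ω)
    (hF : ContDiffOn ℝ 3 F Ω) (hf : DifferentiableOn ℝ f Ω) (hτ : ContDiffOn ℝ 3 τ I)
    (hmaps : Set.MapsTo (fun q => (q, τ q)) I Ω)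
    (hs : ∀ p ∈ Ω, xs E F p = -xt A B p) (ht : ∀ p ∈ Ω, xt E F p = xs A B p)
    (hfs : ∀ p ∈ Ω, pds f p = det2 (xs A B p) (xmap E F p))
    (hft : ∀ p ∈ Ω, pdt f p = det2 (xt A B p) (xmap E F p))
    (hline : ∀ q ∈ I, det2 (x₀ - xmap A B (q, τ q)) (xmap E F (q, τ q)) = 0)
    (hr : r ∈ I) (hx₀ : xmap A B (r, τ r) = x₀) (hδ : deltaMap A B (r, τ r) = 0)
    (hne : det2 (xt A B (r, τ r)) (xmap E F (r, τ r)) ≠ 0) :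
    deriv (deriv (deriv fun q => f (q, τ q))) r =
      (1 + deriv τ r ^ 2) * deriv (fun q => deltaMap A B (q, τ q)) r := by
  have hA₁ {q : ℝ} (hq : q ∈ I) : DifferentiableAt ℝ A (q, τ q) :=
    (hA.differentiableOn two_ne_zero).differentiableAt (hΩ.mem_nhds (hmaps hq))
  have hB₁ {q : ℝ} (hq : q ∈ I) : DifferentiableAt ℝ B (q, τ q) :=
    (hB.differentiableOn two_ne_zero).differentiableAt (hΩ.mem_nhds (hmaps hq))
  have hτ₁ {q : ℝ} (hq : q ∈ I) : DifferentiableAt ℝ τ q :=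
    (hτ.differentiableOn three_ne_zero).differentiableAt (hI.mem_nhds hq)
  have hgraph : ContDiffOn ℝ 3 (fun q => (q, τ q)) I := contDiffOn_id.prodMk hτ
  have hx : ContDiffOn ℝ 2 (fun q => xmap A B (q, τ q)) I :=
    (hA.prodMk hB).comp (hgraph.of_le (by norm_num)) hmaps
  have hc : ContDiffOn ℝ 3 (fun q => xmap E F (q, τ q)) I := (hE.prodMk hF).comp hgraph hmaps
  have hx' : deriv (fun q => xmap A B (q, τ q)) r = 0 := by
    refine deriv_xmap_graph_eq_zero (hA₁ hr) (hB₁ hr) (hτ₁ hr) hδ hne ?_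
    simpa [hx₀, det2Bilin_apply] using (pairing_sub_deriv_eq det2Bilin hI
      (hx.differentiableOn two_ne_zero) (hc.differentiableOn three_ne_zero) hline hr).symm
  have hf' : ∀ q ∈ I, deriv (fun q => f (q, τ q)) q =
      det2Bilin (deriv (fun q => xmap A B (q, τ q)) q) (xmap E F (q, τ q)) := fun q hq =>
    deriv_comp_graph_eq_det2 (hA₁ hq) (hB₁ hq) (hf.differentiableAt (hΩ.mem_nhds (hmaps hq)))
      (hτ₁ hq) (hfs _ (hmaps hq)) (hft _ (hmaps hq))
  rw [deriv_deriv_deriv_eq_neg_deriv_pairing det2Bilin hI hx hc hf' hline hr hx₀ hx',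
    neg_eq_iff_eq_neg]
  exact deriv_det2_deriv_xmap_graph_of_conjugate hΩ hI hA hB (hE.differentiableOn three_ne_zero)
    (hF.differentiableOn three_ne_zero) (hτ.of_le (by norm_num)) hmaps hs ht hr hδ

end Graph

theorem Gsss_formula
    (Ω : Set (ℝ × ℝ)) (hΩ : IsOpen Ω)
    (A B C D : ℝ × ℝ → ℝ)
    (hA : ContDiffOn ℝ (⊤ : ℕ∞) A Ω) (hB : ContDiffOn ℝ (⊤ : ℕ∞) B Ω)
    (hC : ContDiffOn ℝ (⊤ : ℕ∞) C Ω) (hD : ContDiffOn ℝ (⊤ : ℕ∞) D Ω)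
    (hCR1 : ∀ p ∈ Ω, pds A p = - pdt D p)
    (hCR2 : ∀ p ∈ Ω, pdt A p = pds D p)
    (hCR3 : ∀ p ∈ Ω, pds B p = pdt C p)
    (hCR4 : ∀ p ∈ Ω, pdt B p = - pds C p)
    (g : ℝ × ℝ → ℝ) (hg : ContDiffOn ℝ (⊤ : ℕ∞) g Ω)
    (hgs : ∀ p ∈ Ω, pds g p = det2 (xs A B p) (cmap C D p))
    (hgt : ∀ p ∈ Ω, pdt g p = det2 (xt A B p) (cmap C D p))
    (s₀ t₀ : ℝ) (hst₀ : (s₀, t₀) ∈ Ω)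
    (hne₀ : det2 (xt A B (s₀, t₀)) (cmap C D (s₀, t₀)) ≠ 0)
    (I : Set ℝ) (U : Set (ℝ × ℝ)) (hI : IsOpen I) (hU : IsOpen U)
    (hs₀ : s₀ ∈ I) (hx₀ : xmap A B (s₀, t₀) ∈ U)
    (T : ℝ → ℝ × ℝ → ℝ)
    (hT : ContDiffOn ℝ (⊤ : ℕ∞) (fun q : ℝ × (ℝ × ℝ) => T q.1 q.2) (I ×ˢ U))
    (hT₀ : T s₀ (xmap A B (s₀, t₀)) = t₀)
    (hTmem : ∀ s ∈ I, ∀ xb ∈ U, (s, T s xb) ∈ Ω)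
    (hTeq : ∀ s ∈ I, ∀ xb ∈ U,
      det2 (xb - xmap A B (s, T s xb)) (cmap C D (s, T s xb)) = 0)
    (s : ℝ) (xb : ℝ × ℝ) (hs : s ∈ I) (hxb : xb ∈ U)
    (hx : xb = xmap A B (s, T s xb))
    (hδ : deltaMap A B (s, T s xb) = 0)
    (hne : det2 (xt A B (s, T s xb)) (cmap C D (s, T s xb)) ≠ 0)
    :
    deriv (deriv (deriv (fun s' => g (s', T s' xb)))) s
        = (1 + (deriv (fun s' => T s' xb) s) ^ 2)
            * deriv (fun s' => deltaMap A B (s', T s' xb)) s ∧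
    deriv (fun s' => deltaMap A B (s', T s' xb)) s
        = pds (deltaMap A B) (s, T s xb)
            + pdt (deltaMap A B) (s, T s xb) * deriv (fun s' => T s' xb) s ∧
    (deriv (deriv (deriv (fun s' => g (s', T s' xb)))) s = 0 ↔
      deriv (fun s' => deltaMap A B (s', T s' xb)) s = 0) := by
  set τ : ℝ → ℝ := fun r => T r xb
  have hmaps : Set.MapsTo (fun r => (r, τ r)) I Ω := fun r hr => hTmem r hr xb hxb
  have hτ : ContDiffOn ℝ (⊤ : ℕ∞) τ I :=
    hT.comp (contDiffOn_id.prodMk contDiffOn_const) fun r hr => ⟨hr, hxb⟩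
  have hle (n : ℕ) : (n : WithTop ℕ∞) ≤ (⊤ : ℕ∞) := mod_cast le_top
  have hcs : ∀ p ∈ Ω, xs (-D) C p = -xt A B p := fun p hp => by
    simp [xs, xt, pds_neg, hCR2 p hp, hCR4 p hp]
  have hct : ∀ p ∈ Ω, xt (-D) C p = xs A B p := fun p hp => by
    simp [xs, xt, pdt_neg, hCR1 p hp, hCR3 p hp]
  have hG : deriv (deriv (deriv fun r => g (r, τ r))) s =
      (1 + deriv τ s ^ 2) * deriv (fun r => deltaMap A B (r, τ r)) s :=
    deriv_deriv_deriv_comp_graph hΩ hI (hA.of_le (hle 2)) (hB.of_le (hle 2))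
      (hD.neg.of_le (hle 3)) (hC.of_le (hle 3)) (hg.differentiableOn (by simp)) (hτ.of_le (hle 3))
      hmaps hcs hct hgs hgt (fun r hr => hTeq r hr xb hxb) hs hx.symm hδ hne
  have hδ' := hasDerivAt_comp_graph
    (differentiableAt_deltaMap ((hA.contDiffAt (hΩ.mem_nhds (hmaps hs))).of_le (hle 2))
      ((hB.contDiffAt (hΩ.mem_nhds (hmaps hs))).of_le (hle 2)))
    ((hτ.differentiableOn (by simp)).differentiableAt (hI.mem_nhds hs))
  have hspeed : 1 + deriv τ s ^ 2 ≠ 0 := by positivity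
  exact ⟨hG, hδ'.deriv, by rw [hG, mul_eq_zero_iff_left hspeed]⟩
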